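/- Let C be a regular Ord-category, R: X ↬ Y and T: A ↬ B ideals, and g: B→Y, f: A→X morphisms. Then g_*∘T∘f^* ⊆ R if and only if T ⊆ g^*∘R∘f_*. -/

import Mathlib

open CategoryTheory

universe w v u

/-- An `Ord`-enrichment of a category: a preorder on each hom-set,
preserved by composition on both sides. -/
class OrdEnrichment (C : Type u) [Category.{v} C] : Type (max u v) where
  ord : ∀ {X Y : C}, (X ⟶ Y) → (X ⟶ Y) → Prop
  ord_refl : ∀ {X Y : C} (f : X ⟶ Y), ord f f
  ord_trans : ∀ {X Y : C} {f g h : X ⟶ Y}, ord f g → ord g h → ord f h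
  precomp_ord : ∀ {X Y Z : C} (e : X ⟶ Y) {f g : Y ⟶ Z}, ord f g → ord (e ≫ f) (e ≫ g)
  postcomp_ord : ∀ {X Y Z : C} {f g : X ⟶ Y} (h : Y ⟶ Z), ord f g → ord (f ≫ h) (g ≫ h)

/-- The preorder on hom-sets of an `Ord`-category. -/
def homLe {C : Type u} [Category.{v} C] [OrdEnrichment C] {X Y : C} (f g : X ⟶ Y) : Prop :=
  OrdEnrichment.ord f g

infixl:50 " ≼ " => homLe

section

variable {C : Type u} [Category.{v} C] [OrdEnrichment C]

/-- A full (ff-) morphism. -/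
def IsFF {X Y : C} (m : X ⟶ Y) : Prop :=
  ∀ {A : C} (a a' : A ⟶ X), (a ≫ m) ≼ (a' ≫ m) → a ≼ a'

/-- An ff-monomorphism: a full monomorphism. -/
def IsFFMono {X Y : C} (m : X ⟶ Y) : Prop := IsFF m ∧ Mono m

/-- An so-morphism: a morphism left orthogonal to every ff-monomorphism. -/
def IsSO {A B : C} (e : A ⟶ B) : Prop :=
  ∀ {X Y : C} (m : X ⟶ Y), IsFFMono m → ∀ (u : A ⟶ X) (v : B ⟶ Y),
    u ≫ m = e ≫ v → ∃ d : B ⟶ X, e ≫ d = u ∧ d ≫ m = v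

/-- The (strict) comma object square for the ordered pair `(f, g)`. -/
structure IsCommaSq {X Y Z : C} (f : X ⟶ Y) (g : Z ⟶ Y) (P : C)
    (π₁ : P ⟶ X) (π₂ : P ⟶ Z) : Prop where
  le : (π₁ ≫ f) ≼ (π₂ ≫ g)
  lift : ∀ {A : C} (α : A ⟶ X) (β : A ⟶ Z), (α ≫ f) ≼ (β ≫ g) →
    ∃! h : A ⟶ P, h ≫ π₁ = α ∧ h ≫ π₂ = β
  lift_ord : ∀ {A : C} {h h' : A ⟶ P}, (h ≫ π₁) ≼ (h' ≫ π₁) → (h ≫ π₂) ≼ (h' ≫ π₂) → h ≼ h'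

/-- A 2-pullback square (pullback with the `Ord`-enriched universal property). -/
structure Is2Pullback {X Y Z : C} (f : X ⟶ Z) (g : Y ⟶ Z) (P : C)
    (p : P ⟶ X) (q : P ⟶ Y) : Prop where
  comm : p ≫ f = q ≫ g
  lift : ∀ {A : C} (a : A ⟶ X) (b : A ⟶ Y), a ≫ f = b ≫ g →
    ∃! h : A ⟶ P, h ≫ p = a ∧ h ≫ q = b
  lift_ord : ∀ {A : C} {h h' : A ⟶ P}, (h ≫ p) ≼ (h' ≫ p) → (h ≫ q) ≼ (h' ≫ q) → h ≼ h'

/-- A binary 2-product. -/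
structure Is2Product (X Y : C) (P : C) (p : P ⟶ X) (q : P ⟶ Y) : Prop where
  lift : ∀ {A : C} (a : A ⟶ X) (b : A ⟶ Y), ∃! h : A ⟶ P, h ≫ p = a ∧ h ≫ q = b
  lift_ord : ∀ {A : C} {h h' : A ⟶ P}, (h ≫ p) ≼ (h' ≫ p) → (h ≫ q) ≼ (h' ≫ q) → h ≼ h'

/-- A 2-equalizer. -/
structure Is2Equalizer {X Y : C} (f g : X ⟶ Y) (E : C) (i : E ⟶ X) : Prop where
  comm : i ≫ f = i ≫ g
  lift : ∀ {A : C} (a : A ⟶ X), a ≫ f = a ≫ g → ∃! h : A ⟶ E, h ≫ i = a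
  lift_ord : ∀ {A : C} {h h' : A ⟶ E}, (h ≫ i) ≼ (h' ≫ i) → h ≼ h'

/-- A bicoinserter of a parallel pair. -/
structure IsBicoinserter {X A E : C} (a b : X ⟶ A) (e : A ⟶ E) : Prop where
  le : (a ≫ e) ≼ (b ≫ e)
  desc : ∀ {F : C} (f : A ⟶ F), (a ≫ f) ≼ (b ≫ f) →
    ∃ t : E ⟶ F, (e ≫ t) ≼ f ∧ f ≼ (e ≫ t)
  desc_ord : ∀ {F : C} {f f' : A ⟶ F} {t t' : E ⟶ F},
    (e ≫ t) ≼ f → f ≼ (e ≫ t) → (e ≫ t') ≼ f' → f' ≼ (e ≫ t') → f ≼ f' → t ≼ t'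

/-- A relation from `X` to `Y` in an `Ord`-category: a jointly ff-monomorphic span. -/
structure RelStr (X Y : C) : Type (max u v) where
  obj : C
  p : obj ⟶ X
  q : obj ⟶ Y
  jointly_ff : ∀ {A : C} (a a' : A ⟶ obj), (a ≫ p) ≼ (a' ≫ p) → (a ≫ q) ≼ (a' ≫ q) → a ≼ a'
  jointly_mono : ∀ {A : C} (a a' : A ⟶ obj), a ≫ p = a' ≫ p → a ≫ q = a' ≫ q → a = a'

/-- `(x, y) ∈_A R`. -/
def RelStr.Mem {X Y : C} (R : RelStr X Y) {A : C} (x : A ⟶ X) (y : A ⟶ Y) : Prop :=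
  ∃ h : A ⟶ R.obj, h ≫ R.p = x ∧ h ≫ R.q = y

/-- `R ⊆ S`: `R` factors through `S` (over `X × Y`). -/
def RelStr.Sub {X Y : C} (R S : RelStr X Y) : Prop :=
  ∃ φ : R.obj ⟶ S.obj, φ ≫ S.p = R.p ∧ φ ≫ S.q = R.q

/-- `R ≅ S`: mutual factorisation. -/
def RelStr.Iso {X Y : C} (R S : RelStr X Y) : Prop := R.Sub S ∧ S.Sub R

/-- The opposite relation `R°`. -/
def RelStr.op {X Y : C} (R : RelStr X Y) : RelStr Y X where
  obj := R.obj
  p := R.q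
  q := R.p
  jointly_ff := fun a a' h1 h2 => R.jointly_ff a a' h2 h1
  jointly_mono := fun a a' h1 h2 => R.jointly_mono a a' h2 h1

/-- A relation is an (order) ideal when it is closed under lowering the first
coordinate and raising the second coordinate. -/
def IsIdealRel {X Y : C} (R : RelStr X Y) : Prop :=
  ∀ {A : C} (x x' : A ⟶ X) (y y' : A ⟶ Y), x' ≼ x → R.Mem x y → y ≼ y' → R.Mem x' y'

/-- The relation `f_♯` given by the span `(1_X, f)`. -/
def sharpRel {X Y : C} (f : X ⟶ Y) : RelStr X Y where
  obj := X
  p := 𝟙 X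
  q := f
  jointly_ff := fun a a' h1 _ => by simpa using h1
  jointly_mono := fun a a' h1 _ => by simpa using h1

/-- The relation `f°`, the opposite of `f_♯`. -/
def cosharpRel {X Y : C} (f : X ⟶ Y) : RelStr Y X := (sharpRel f).op

/-- `M` is the meet (intersection) `R ∧ S` of two relations. -/
def IsMeetRel {X Y : C} (R S M : RelStr X Y) : Prop :=
  M.Sub R ∧ M.Sub S ∧
    ∀ {A : C} (x : A ⟶ X) (y : A ⟶ Y), R.Mem x y → S.Mem x y → M.Mem x y

/-- `T` is the composite `S ∘ R` of the relations `R : X ↬ Y` and `S : Y ↬ Z`,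
obtained via the (so-morphism, ff-monomorphism) factorisation of the span
given by the 2-pullback over the middle object. -/
def IsCompositeRel {X Y Z : C} (R : RelStr X Y) (S : RelStr Y Z) (T : RelStr X Z) : Prop :=
  ∃ (P : C) (p₁ : P ⟶ R.obj) (p₂ : P ⟶ S.obj) (e : P ⟶ T.obj),
    Is2Pullback R.q S.p P p₁ p₂ ∧ IsSO e ∧ e ≫ T.p = p₁ ≫ R.p ∧ e ≫ T.q = p₂ ≫ S.q

/-- `R` is the ideal `f_* = f / 1_Y : X ↬ Y`. -/
def IsStarRel {X Y : C} (f : X ⟶ Y) (R : RelStr X Y) : Prop :=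
  IsCommaSq f (𝟙 Y) R.obj R.p R.q

/-- `R` is the ideal `f^* = 1_Y / f : Y ↬ X`. -/
def IsCostarRel {X Y : C} (f : X ⟶ Y) (R : RelStr Y X) : Prop :=
  IsCommaSq (𝟙 Y) f R.obj R.p R.q

/-- `R` is the identity ideal `I_X = 1_X / 1_X`. -/
def IsIdRel (X : C) (R : RelStr X X) : Prop :=
  IsCommaSq (𝟙 X) (𝟙 X) R.obj R.p R.q

/-- `S` is the 2-pullback of the relation `R ↣ X × Y` along `f × g`. -/
def IsRelPullback {X Y U V : C} (R : RelStr X Y) (f : U ⟶ X) (g : V ⟶ Y)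
    (S : RelStr U V) : Prop :=
  ∃ h : S.obj ⟶ R.obj, h ≫ R.p = S.p ≫ f ∧ h ≫ R.q = S.q ≫ g ∧
    ∀ {A : C} (a : A ⟶ U) (b : A ⟶ V) (c : A ⟶ R.obj),
      c ≫ R.p = a ≫ f → c ≫ R.q = b ≫ g →
      ∃ d : A ⟶ S.obj, d ≫ S.p = a ∧ d ≫ S.q = b ∧ d ≫ h = c

/-- A binary 2-coproduct. -/
structure Is2Coproduct (X Y : C) (P : C) (i : X ⟶ P) (j : Y ⟶ P) : Prop where
  desc : ∀ {A : C} (a : X ⟶ A) (b : Y ⟶ A), ∃! h : P ⟶ A, i ≫ h = a ∧ j ≫ h = b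
  desc_ord : ∀ {A : C} {h h' : P ⟶ A}, (i ≫ h) ≼ (i ≫ h') → (j ≫ h) ≼ (j ≫ h') → h ≼ h'

/-- A ternary 2-coproduct. -/
structure Is3Coproduct (X Y Z : C) (P : C) (i : X ⟶ P) (j : Y ⟶ P) (k : Z ⟶ P) : Prop where
  desc : ∀ {A : C} (a : X ⟶ A) (b : Y ⟶ A) (c : Z ⟶ A),
    ∃! h : P ⟶ A, i ≫ h = a ∧ j ≫ h = b ∧ k ≫ h = c
  desc_ord : ∀ {A : C} {h h' : P ⟶ A},
    (i ≫ h) ≼ (i ≫ h') → (j ≫ h) ≼ (j ≫ h') → (k ≫ h) ≼ (k ≫ h') → h ≼ h'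

/-- Reflexivity of a relation on `X`: the diagonal factors through it. -/
def ReflexiveRel {X : C} (R : RelStr X X) : Prop := R.Mem (𝟙 X) (𝟙 X)

/-- Transitivity of a relation on `X`: `R ∘ R ⊆ R`. -/
def TransitiveRel {X : C} (R : RelStr X X) : Prop :=
  ∀ T : RelStr X X, IsCompositeRel R R T → T.Sub R

/-- A congruence: a reflexive and transitive ideal. -/
def IsCongruence {X : C} (R : RelStr X X) : Prop :=
  IsIdealRel R ∧ ReflexiveRel R ∧ TransitiveRel R

/-- An effective congruence: `R ≅ f^* ∘ f_*` for some morphism `f`. -/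
def EffectiveCongruence {X : C} (R : RelStr X X) : Prop :=
  ∃ (Y : C) (f : X ⟶ Y) (Fstar : RelStr X Y) (Fco : RelStr Y X) (T : RelStr X X),
    IsStarRel f Fstar ∧ IsCostarRel f Fco ∧ IsCompositeRel Fstar Fco T ∧ R.Iso T

/-- The `Ord`-enriched difunctionality property of a relation. -/
def OrdDifunctional {X Y : C} (D : RelStr X Y) : Prop :=
  ∀ {A : C} (x u u' : A ⟶ X) (y y' v : A ⟶ Y),
    D.Mem x y → y ≼ y' → D.Mem u y' → u ≼ u' → D.Mem u' v → D.Mem x v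

end

/-- A regular `Ord`-category: finite weighted limits, an
(so-morphism, ff-monomorphism) factorisation system, so-morphisms stable under
2-pullbacks, and every so-morphism the bicoinserter of its comma object projections. -/
structure IsRegularOrd (C : Type u) [Category.{v} C] [OrdEnrichment C] : Prop where
  hasTerminal : ∃ T : C, ∀ A : C, ∃ f : A ⟶ T, ∀ g : A ⟶ T, g = f
  has2Products : ∀ X Y : C, ∃ (P : C) (p : P ⟶ X) (q : P ⟶ Y), Is2Product X Y P p q
  has2Equalizers : ∀ {X Y : C} (f g : X ⟶ Y), ∃ (E : C) (i : E ⟶ X), Is2Equalizer f g E i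
  has2Pullbacks : ∀ {X Y Z : C} (f : X ⟶ Z) (g : Y ⟶ Z),
    ∃ (P : C) (p : P ⟶ X) (q : P ⟶ Y), Is2Pullback f g P p q
  hasCommaObjects : ∀ {X Y Z : C} (f : X ⟶ Y) (g : Z ⟶ Y),
    ∃ (P : C) (p : P ⟶ X) (q : P ⟶ Z), IsCommaSq f g P p q
  fact : ∀ {X Y : C} (f : X ⟶ Y), ∃ (I : C) (e : X ⟶ I) (m : I ⟶ Y),
    IsSO e ∧ IsFFMono m ∧ e ≫ m = f
  so_pullback_stable : ∀ {X Y Z P : C} (f : X ⟶ Z) (g : Y ⟶ Z) (p : P ⟶ X) (q : P ⟶ Y),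
    Is2Pullback f g P p q → IsSO g → IsSO p
  so_bicoinserter : ∀ {A B P : C} (e : A ⟶ B), IsSO e →
    ∀ (π₁ π₂ : P ⟶ A), IsCommaSq e e P π₁ π₂ → IsBicoinserter π₁ π₂ e

/-- An `Ord`-Mal'tsev category: every ideal is `Ord`-difunctional. -/
def IsOrdMaltsev (C : Type u) [Category.{v} C] [OrdEnrichment C] : Prop :=
  ∀ (X Y : C) (D : RelStr X Y), IsIdealRel D → OrdDifunctional D

/-- An `Ord`-W-Mal'tsev object: every ideal is `Ord`-difunctional with respect to
generalised elements with domain `Y`. -/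
def IsOrdWMaltsevObj {C : Type u} [Category.{v} C] [OrdEnrichment C] (Y : C) : Prop :=
  ∀ (X Z : C) (R : RelStr X Z), IsIdealRel R →
    ∀ (x u u' : Y ⟶ X) (z z' v : Y ⟶ Z),
      R.Mem x z → z ≼ z' → R.Mem u z' → u ≼ u' → R.Mem u' v → R.Mem x v


section Helpers

variable {C : Type u} [Category.{v} C] [OrdEnrichment C]

theorem homLe_refl' {X Y : C} (f : X ⟶ Y) : f ≼ f := OrdEnrichment.ord_refl f

theorem homLe_trans' {X Y : C} {f g h : X ⟶ Y} (h1 : f ≼ g) (h2 : g ≼ h) : f ≼ h :=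
  OrdEnrichment.ord_trans h1 h2

theorem homLe_pre {X Y Z : C} (e : X ⟶ Y) {f g : Y ⟶ Z} (h : f ≼ g) : (e ≫ f) ≼ (e ≫ g) :=
  OrdEnrichment.precomp_ord e h

theorem homLe_post {X Y Z : C} {f g : X ⟶ Y} (k : Y ⟶ Z) (h : f ≼ g) : (f ≫ k) ≼ (g ≫ k) :=
  OrdEnrichment.postcomp_ord k h

theorem mem_pre {X Y : C} {R : RelStr X Y} {A A' : C} (e : A' ⟶ A) {x : A ⟶ X} {y : A ⟶ Y}
    (h : R.Mem x y) : R.Mem (e ≫ x) (e ≫ y) := by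
  obtain ⟨k, h1, h2⟩ := h
  exact ⟨e ≫ k, by rw [Category.assoc, h1], by rw [Category.assoc, h2]⟩

theorem relSub_mem {X Y : C} {R S : RelStr X Y} (hs : R.Sub S) {A : C} {x : A ⟶ X} {y : A ⟶ Y}
    (h : R.Mem x y) : S.Mem x y := by
  obtain ⟨k, h1, h2⟩ := h
  obtain ⟨φ, h3, h4⟩ := hs
  exact ⟨k ≫ φ, by rw [Category.assoc, h3, h1], by rw [Category.assoc, h4, h2]⟩

/-- Membership in a relation descends along so-morphisms. -/
theorem mem_descend (hC : IsRegularOrd C) {X Y : C} (R : RelStr X Y) {A A' : C} (e : A' ⟶ A)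
    (he : IsSO e) (x : A ⟶ X) (y : A ⟶ Y) (h : R.Mem (e ≫ x) (e ≫ y)) : R.Mem x y := by
  obtain ⟨P, p, q, hP⟩ := hC.has2Products X Y
  obtain ⟨m, ⟨m1, m2⟩, -⟩ := hP.lift R.p R.q
  obtain ⟨v, ⟨v1, v2⟩, -⟩ := hP.lift x y
  obtain ⟨k, k1, k2⟩ := h
  have hm : IsFFMono m := by
    refine ⟨?_, ⟨?_⟩⟩
    · intro B a a' hle
      apply R.jointly_ff
      · have := homLe_post p hle
        rwa [Category.assoc, Category.assoc, m1] at this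
      · have := homLe_post q hle
        rwa [Category.assoc, Category.assoc, m2] at this
    · intro B a a' heq
      apply R.jointly_mono
      · rw [← m1, ← Category.assoc, heq, Category.assoc]
      · rw [← m2, ← Category.assoc, heq, Category.assoc]
  have hsq : k ≫ m = e ≫ v := by
    obtain ⟨w, -, hw⟩ := hP.lift (e ≫ x) (e ≫ y)
    rw [hw (k ≫ m) ⟨by rw [Category.assoc, m1, k1], by rw [Category.assoc, m2, k2]⟩,
      hw (e ≫ v) ⟨by rw [Category.assoc, v1], by rw [Category.assoc, v2]⟩]
  obtain ⟨d, -, d2⟩ := he m hm k v hsq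
  exact ⟨d, by rw [← m1, ← Category.assoc, d2, v1], by rw [← m2, ← Category.assoc, d2, v2]⟩

theorem comp_intro {X Y Z : C} {R : RelStr X Y} {S : RelStr Y Z} {T : RelStr X Z}
    (h : IsCompositeRel R S T) {A : C} {x : A ⟶ X} {y : A ⟶ Y} {z : A ⟶ Z}
    (h1 : R.Mem x y) (h2 : S.Mem y z) : T.Mem x z := by
  obtain ⟨P, p₁, p₂, e, hP, -, e1, e2⟩ := h
  obtain ⟨a, a1, a2⟩ := h1
  obtain ⟨b, b1, b2⟩ := h2
  obtain ⟨l, ⟨l1, l2⟩, -⟩ := hP.lift a b (by rw [a2, b1])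
  refine ⟨l ≫ e, ?_, ?_⟩
  · rw [Category.assoc, e1, ← Category.assoc, l1, a1]
  · rw [Category.assoc, e2, ← Category.assoc, l2, b2]

theorem comp_elim (hC : IsRegularOrd C) {X Y Z : C} {R : RelStr X Y} {S : RelStr Y Z}
    {T : RelStr X Z} (h : IsCompositeRel R S T) {A : C} {x : A ⟶ X} {z : A ⟶ Z}
    (hm : T.Mem x z) : ∃ (A' : C) (c : A' ⟶ A) (y : A' ⟶ Y), IsSO c ∧
      R.Mem (c ≫ x) y ∧ S.Mem y (c ≫ z) := by
  obtain ⟨P, p₁, p₂, e, hP, he, e1, e2⟩ := h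
  obtain ⟨k, k1, k2⟩ := hm
  obtain ⟨Q, c, d, hQ⟩ := hC.has2Pullbacks k e
  refine ⟨Q, c, d ≫ p₁ ≫ R.q, hC.so_pullback_stable k e c d hQ he,
    ⟨d ≫ p₁, ?_, by simp⟩, ⟨d ≫ p₂, by rw [hP.comm]; simp, ?_⟩⟩
  · rw [← k1, ← Category.assoc, hQ.comm, Category.assoc, Category.assoc, e1]
  · rw [← k2, ← Category.assoc, hQ.comm, Category.assoc, Category.assoc, e2]

theorem comma_mem {X Y Z : C} {f : X ⟶ Y} {g : Z ⟶ Y} {R : RelStr X Z}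
    (h : IsCommaSq f g R.obj R.p R.q) {A : C} (x : A ⟶ X) (z : A ⟶ Z) :
    R.Mem x z ↔ (x ≫ f) ≼ (z ≫ g) := by
  constructor
  · rintro ⟨k, rfl, rfl⟩
    simpa using homLe_pre k h.le
  · intro hle
    exact (h.lift x z hle).exists

end Helpers

/-- Adjunction-type property: `g_* ∘ T ∘ f^* ⊆ R ↔ T ⊆ g^* ∘ R ∘ f_*`. -/
theorem statement5 {C : Type u} [Category.{v} C] [OrdEnrichment C] (hC : IsRegularOrd C)
    {X Y A B : C} (R : RelStr X Y) (hR : IsIdealRel R)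
    (T : RelStr A B) (hT : IsIdealRel T)
    (g : B ⟶ Y) (f : A ⟶ X)
    (Gstar : RelStr B Y) (hGstar : IsStarRel g Gstar)
    (Gco : RelStr Y B) (hGco : IsCostarRel g Gco)
    (Fstar : RelStr A X) (hFstar : IsStarRel f Fstar)
    (Fco : RelStr X A) (hFco : IsCostarRel f Fco)
    (P1 : RelStr X B) (hP1 : IsCompositeRel Fco T P1)
    (P2 : RelStr X Y) (hP2 : IsCompositeRel P1 Gstar P2)
    (Q1 : RelStr A Y) (hQ1 : IsCompositeRel Fstar R Q1)
    (Q2 : RelStr A B) (hQ2 : IsCompositeRel Q1 Gco Q2) :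
    P2.Sub R ↔ T.Sub Q2 := by
  have cGs : ∀ {W : C} (b : W ⟶ B) (y : W ⟶ Y), Gstar.Mem b y ↔ (b ≫ g) ≼ y := by
    intro W b y; simpa using comma_mem hGstar b y
  have cGc : ∀ {W : C} (y : W ⟶ Y) (b : W ⟶ B), Gco.Mem y b ↔ y ≼ (b ≫ g) := by
    intro W y b; simpa using comma_mem hGco y b
  have cFs : ∀ {W : C} (a : W ⟶ A) (x : W ⟶ X), Fstar.Mem a x ↔ (a ≫ f) ≼ x := by
    intro W a x; simpa using comma_mem hFstar a x
  have cFc : ∀ {W : C} (x : W ⟶ X) (a : W ⟶ A), Fco.Mem x a ↔ x ≼ (a ≫ f) := by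
    intro W x a; simpa using comma_mem hFco x a
  constructor
  · intro hs
    have hTm : T.Mem T.p T.q := ⟨𝟙 _, by simp, by simp⟩
    have h1 := comp_intro hP1 ((cFc (T.p ≫ f) T.p).2 (homLe_refl' _)) hTm
    have h2 := comp_intro hP2 h1 ((cGs T.q (T.q ≫ g)).2 (homLe_refl' _))
    have h3 := comp_intro hQ1 ((cFs T.p (T.p ≫ f)).2 (homLe_refl' _)) (relSub_mem hs h2)
    exact comp_intro hQ2 h3 ((cGc (T.q ≫ g) T.q).2 (homLe_refl' _))
  · intro hs
    have hPm : P2.Mem P2.p P2.q := ⟨𝟙 _, by simp, by simp⟩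
    obtain ⟨W1, c1, b, s1, m1, n1⟩ := comp_elim hC hP2 hPm
    obtain ⟨W2, c2, a, s2, m2, n2⟩ := comp_elim hC hP1 m1
    obtain ⟨W3, c3, y', s3, m3, n3⟩ := comp_elim hC hQ2 (relSub_mem hs n2)
    obtain ⟨W4, c4, x', s4, m4, n4⟩ := comp_elim hC hQ1 m3
    rw [cGs] at n1
    rw [cFc] at m2
    rw [cGc] at n3
    rw [cFs] at m4
    refine mem_descend hC R c1 s1 _ _ (mem_descend hC R c2 s2 _ _ (mem_descend hC R c3 s3 _ _
      (mem_descend hC R c4 s4 _ _ (hR x' _ (c4 ≫ y') _ ?_ n4 ?_))))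
    · refine homLe_trans' (homLe_pre c4 (homLe_pre c3 m2)) ?_
      simpa using m4
    · refine homLe_trans' (homLe_pre c4 n3) ?_
      simpa using homLe_pre c4 (homLe_pre c3 (homLe_pre c2 n1))
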